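/- Let k ≥ 5 be odd and consider arrangements of Fin (k+1). For 1 ≤ j ≤ k−2, the arrangement obtained from the identity by applying, in order, C, L, C and then the pair (R, C) repeated j times is the arrangement a with a(0) = k−j+1, a(1) = 1, a(p) = k−j+p for 2 ≤ p ≤ j, a(j+1) = 2, a(j+2) = 0, and a(p) = p−j for j+3 ≤ p ≤ k; i.e., the arrangement (k−j+1, 1, k−j+2, …, k, 2, 0, 3, 4, …, k−j). -/

import Mathlib

/-- `cyc i j` is the permutation of positions with `i ↦ j`, `p ↦ p - 1` for `i < p ≤ j`,
and every other position fixed (the cycle `(j, j-1, …, i)`). -/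
def cyc {n : ℕ} (i j : Fin n) : Equiv.Perm (Fin n) :=
  (((List.finRange n).filter (fun p => decide (i ≤ p ∧ p ≤ j))).reverse).formPerm

/-- The move `C` on arrangements of `Fin (k+1)`: exchange the entries at positions 1 and 2. -/
def Cmove (k : ℕ) (a : Equiv.Perm (Fin (k + 1))) : Equiv.Perm (Fin (k + 1)) :=
  if h : 2 < k + 1 then (Equiv.swap ⟨1, by omega⟩ ⟨2, h⟩).trans a else a

/-- The move `L` on arrangements of `Fin (k+1)`: exchange the entries at positions 0 and 1. -/
def Lmove (k : ℕ) (a : Equiv.Perm (Fin (k + 1))) : Equiv.Perm (Fin (k + 1)) :=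
  if h : 1 < k + 1 then (Equiv.swap ⟨0, by omega⟩ ⟨1, h⟩).trans a else a

/-- The move `R` on arrangements of `Fin (k+1)`: move the entry at position `k` to
position 0, shifting the entries at positions `0, …, k-1` one position to the right. -/
def Rmove (k : ℕ) (a : Equiv.Perm (Fin (k + 1))) : Equiv.Perm (Fin (k + 1)) :=
  (cyc (⟨0, by omega⟩ : Fin (k + 1)) ⟨k, by omega⟩).trans a

/-!
Right multiplication by a permutation of the positions turns `C`, `L` and `R` into `swap 1 2`,
`swap 0 1` and the inverse rotation. Hence `C L C` is `swap 0 2`, and one round `(R, C)` fixes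
position 1 and rotates the entries at the other `k` positions `0, 2, 3, …, k` cyclically: under
the enumeration `Fin.succAbove 1` of these positions it is the inverse rotation of `Fin k`.
Thus `j` rounds rotate `(2, 0, 3, …, k)` by `j` places around the fixed entry 1.
-/

open Equiv

theorem formPerm_finRange (n : ℕ) : (List.finRange n).formPerm = finRotate n := by
  ext i
  have := i.neZero
  have h := List.formPerm_apply_getElem _ (List.nodup_finRange n) i (by simp)
  simpa [finRotate_apply, Fin.val_add] using congrArg Fin.val h

theorem cyc_zero_last (k : ℕ) : cyc 0 (Fin.last k) = (finRotate (k + 1))⁻¹ := by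
  simp [cyc, List.formPerm_reverse, formPerm_finRange, Fin.le_last]

theorem Cmove_eq_mul_swap (n : ℕ) (a : Perm (Fin (n + 3))) :
    Cmove (n + 2) a = a * swap 1 2 :=
  dif_pos (by lia)

theorem Lmove_eq_mul_swap (n : ℕ) (a : Perm (Fin (n + 2))) :
    Lmove (n + 1) a = a * swap 0 1 :=
  dif_pos (by lia)

theorem Rmove_eq_mul_finRotate_inv (k : ℕ) (a : Perm (Fin (k + 1))) :
    Rmove k a = a * (finRotate (k + 1))⁻¹ :=
  congrArg (a * ·) (cyc_zero_last k)

theorem Cmove_Lmove_Cmove_eq_mul_swap (n : ℕ) (a : Perm (Fin (n + 3))) :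
    Cmove (n + 2) (Lmove (n + 2) (Cmove (n + 2) a)) = a * swap 0 2 := by
  have swap_conj : swap 1 2 * swap 0 1 * swap 1 2 = (swap 0 2 : Perm (Fin (n + 3))) := by
    rw [swap_mul_swap_mul_swap zero_ne_one (Fin.ne_of_val_ne (show 0 ≠ 2 by lia)), swap_comm]
  simp only [Cmove_eq_mul_swap, Lmove_eq_mul_swap, mul_assoc, ← swap_conj]

/-- The permutation of positions by which one round `(R, C)` acts on arrangements of
`Fin (n + 3)`: performing the round multiplies the arrangement by it on the right.
Here `k = n + 2`, so that the positions 0, 1 and 2 are distinct. -/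
def rightRound (n : ℕ) : Perm (Fin (n + 3)) :=
  (finRotate (n + 3))⁻¹ * swap 1 2

theorem Cmove_Rmove_eq_mul_rightRound (n : ℕ) (a : Perm (Fin (n + 3))) :
    Cmove (n + 2) (Rmove (n + 2) a) = a * rightRound n := by
  rw [Cmove_eq_mul_swap, Rmove_eq_mul_finRotate_inv, mul_assoc, rightRound]

theorem iterate_Cmove_Rmove_eq_mul_rightRound_pow (n j : ℕ) (a : Perm (Fin (n + 3))) :
    (fun b => Cmove (n + 2) (Rmove (n + 2) b))^[j] a = a * rightRound n ^ j := by
  simp only [Cmove_Rmove_eq_mul_rightRound, mul_right_iterate]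

theorem rightRound_apply_one (n : ℕ) : rightRound n 1 = 1 := by
  simp only [rightRound, Perm.mul_apply, swap_apply_left, Perm.inv_eq_iff_eq]
  simp [Fin.ext_iff, Fin.val_add]

theorem rightRound_pow_apply_one (n j : ℕ) : (rightRound n ^ j) 1 = 1 :=
  Perm.pow_apply_eq_self_of_apply_eq_self (rightRound_apply_one n) j

theorem rightRound_apply_succAbove_finRotate {n : ℕ} (i : Fin (n + 2)) :
    rightRound n (Fin.succAbove 1 (finRotate (n + 2) i)) = Fin.succAbove 1 i := by
  rw [rightRound, Perm.mul_apply, Perm.inv_eq_iff_eq, finRotate_apply, finRotate_apply]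
  cases i using Fin.cases with
  | zero => simp
  | succ i =>
    rw [Fin.one_succAbove_succ]
    cases i using Fin.lastCases with
    | last =>
      have zero_ne_two : (0 : Fin (n + 3)) ≠ 2 := Fin.ne_of_val_ne (show 0 ≠ 2 by lia)
      simp [swap_apply_of_ne_of_ne zero_ne_one zero_ne_two]
    | cast i =>
      have ne_one : i.succ.succ.succ ≠ 1 := Fin.ne_of_val_ne (show (i : ℕ) + 3 ≠ 1 by lia)
      have ne_two : i.succ.succ.succ ≠ 2 := Fin.ne_of_val_ne (show (i : ℕ) + 3 ≠ 2 by lia)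
      simp only [Fin.succ_castSucc, Fin.coeSucc_eq_succ, Fin.one_succAbove_succ,
        swap_apply_of_ne_of_ne ne_one ne_two]

theorem rightRound_pow_apply_succAbove_finRotate_pow {n : ℕ} (j : ℕ) (i : Fin (n + 2)) :
    (rightRound n ^ j) (Fin.succAbove 1 ((finRotate (n + 2) ^ j) i)) = Fin.succAbove 1 i := by
  induction j with
  | zero => rfl
  | succ j ih =>
    rw [pow_succ, pow_succ', Perm.mul_apply, Perm.mul_apply,
      rightRound_apply_succAbove_finRotate, ih]

theorem val_finRotate_pow {n : ℕ} (j : ℕ) (i : Fin n) :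
    ((finRotate n ^ j) i : ℕ) = (i + j) % n := by
  have := i.neZero
  induction j with
  | zero => simp [Nat.mod_eq_of_lt]
  | succ j ih => simp [pow_succ', finRotate_apply, Fin.val_add, ih, add_assoc]

theorem rightRound_pow_apply_succAbove {n j m i : ℕ} (hm : m < n + 2) (hi : i < n + 2)
    (h : m = (i + j) % (n + 2)) :
    (rightRound n ^ j) (Fin.succAbove 1 ⟨m, hm⟩) = Fin.succAbove 1 ⟨i, hi⟩ := by
  have finRotate_pow_eq : (finRotate (n + 2) ^ j) ⟨i, hi⟩ = ⟨m, hm⟩ :=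
    Fin.ext ((val_finRotate_pow j _).trans h.symm)
  rw [← finRotate_pow_eq, rightRound_pow_apply_succAbove_finRotate_pow]

theorem one_succAbove_mk_sub_one {n p : ℕ} (hp : 2 ≤ p) (hpn : p < n + 3) :
    Fin.succAbove 1 (⟨p - 1, by lia⟩ : Fin (n + 2)) = ⟨p, hpn⟩ := by
  obtain ⟨i, rfl⟩ := Nat.exists_eq_add_of_le' hp
  exact Fin.one_succAbove_succ ⟨i, by lia⟩

theorem rightRound_pow_apply_zero {n j : ℕ} (hj : 1 ≤ j) (hjn : j ≤ n + 1) :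
    (rightRound n ^ j) 0 = ⟨n + 2 - j + 1, by lia⟩ := by
  rw [← one_succAbove_mk_sub_one (by lia), ← Fin.one_succAbove_zero]
  refine rightRound_pow_apply_succAbove (m := 0) (by lia) _ ?_
  rw [show n + 2 - j + 1 - 1 + j = n + 2 by lia, Nat.mod_self]

theorem rightRound_pow_apply_of_le {n j p : ℕ} (hp : 2 ≤ p) (hpj : p ≤ j) (hjn : j ≤ n + 2) :
    (rightRound n ^ j) ⟨p, by lia⟩ = ⟨n + 2 - j + p, by lia⟩ := by
  rw [← one_succAbove_mk_sub_one hp, ← one_succAbove_mk_sub_one (p := n + 2 - j + p) (by lia)]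
  refine rightRound_pow_apply_succAbove _ _ ?_
  rw [show n + 2 - j + p - 1 + j = p - 1 + (n + 2) by lia, Nat.add_mod_right,
    Nat.mod_eq_of_lt (by lia)]

theorem rightRound_pow_apply_add_one {n j : ℕ} (hj : 1 ≤ j) (hjn : j ≤ n + 1) :
    (rightRound n ^ j) ⟨j + 1, by lia⟩ = 0 := by
  rw [← one_succAbove_mk_sub_one (by lia), ← Fin.one_succAbove_zero]
  refine rightRound_pow_apply_succAbove (i := 0) _ (by lia) ?_
  rw [Nat.mod_eq_of_lt (by lia)]
  lia

theorem rightRound_pow_apply_add {n j p : ℕ} (hp : 2 ≤ p) (hpj : p + j ≤ n + 2) :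
    (rightRound n ^ j) ⟨p + j, by lia⟩ = ⟨p, by lia⟩ := by
  rw [← one_succAbove_mk_sub_one hp, ← one_succAbove_mk_sub_one (by lia)]
  refine rightRound_pow_apply_succAbove _ _ ?_
  rw [Nat.mod_eq_of_lt (by lia)]
  lia

theorem after_j_right_rounds_general (k j : ℕ) (hj1 : 1 ≤ j) (hj2 : j ≤ k - 2)
    (a : Perm (Fin (k + 1)))
    (ha : a = (fun b => Cmove k (Rmove k b))^[j] (Cmove k (Lmove k (Cmove k 1)))) :
    a ⟨0, by lia⟩ = ⟨k - j + 1, by lia⟩ ∧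
    a ⟨1, by lia⟩ = ⟨1, by lia⟩ ∧
    (∀ p : ℕ, 2 ≤ p → ∀ hp : p ≤ j, a ⟨p, by lia⟩ = ⟨k - j + p, by lia⟩) ∧
    a ⟨j + 1, by lia⟩ = ⟨2, by lia⟩ ∧
    a ⟨j + 2, by lia⟩ = ⟨0, by lia⟩ ∧
    (∀ p : ℕ, j + 3 ≤ p → ∀ hp : p ≤ k,
      a ⟨p, Nat.lt_add_one_of_le hp⟩ =
        ⟨p - j, Nat.lt_add_one_of_le ((Nat.sub_le p j).trans hp)⟩) := by
  obtain ⟨n, rfl⟩ : ∃ n, k = n + 2 := ⟨k - 2, by lia⟩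
  rw [Cmove_Lmove_Cmove_eq_mul_swap, iterate_Cmove_Rmove_eq_mul_rightRound_pow, one_mul] at ha
  subst ha
  have one_ne_two : (1 : Fin (n + 3)) ≠ 2 := Fin.ne_of_val_ne (show 1 ≠ 2 by lia)
  have swap_apply_mk {v : ℕ} (hv : 3 ≤ v) (hvn : v < n + 3) :
      (swap 0 2 : Perm (Fin (n + 3))) ⟨v, hvn⟩ = ⟨v, hvn⟩ :=
    swap_apply_of_ne_of_ne (Fin.ne_of_val_ne (show v ≠ 0 by lia))
      (Fin.ne_of_val_ne (show v ≠ 2 by lia))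
  refine ⟨?_, ?_, fun p h2 hp => ?_, ?_, ?_, fun p h3 hp => ?_⟩
  · exact (congrArg _ (rightRound_pow_apply_zero hj1 (by lia))).trans (swap_apply_mk (by lia) _)
  · exact (congrArg _ (rightRound_pow_apply_one n j)).trans
      (swap_apply_of_ne_of_ne one_ne_zero one_ne_two)
  · exact (congrArg _ (rightRound_pow_apply_of_le h2 hp (by lia))).trans (swap_apply_mk (by lia) _)
  · exact (congrArg _ (rightRound_pow_apply_add_one hj1 (by lia))).trans (swap_apply_left _ _)
  · simp only [Nat.add_comm j 2]
    exact (congrArg _ (rightRound_pow_apply_add le_rfl (by lia))).trans (swap_apply_right _ _)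
  · obtain ⟨q, rfl⟩ := Nat.exists_eq_add_of_le' (show j ≤ p by lia)
    simp only [Nat.add_sub_cancel]
    exact (congrArg _ (rightRound_pow_apply_add (by lia) hp)).trans (swap_apply_mk (by lia) _)

/-- For odd `k ≥ 5` and `1 ≤ j ≤ k - 2`, the arrangement obtained from the identity by
applying, in order, `C`, `L`, `C` and then the pair `(R, C)` repeated `j` times is
`(k-j+1, 1, k-j+2, …, k, 2, 0, 3, 4, …, k-j)`; that is, the arrangement `a` with
`a 0 = k-j+1`, `a 1 = 1`, `a p = k-j+p` for `2 ≤ p ≤ j`, `a (j+1) = 2`, `a (j+2) = 0`,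
and `a p = p-j` for `j+3 ≤ p ≤ k`. -/
theorem after_j_right_rounds (k : ℕ) (hk : 5 ≤ k) (hodd : Odd k)
    (j : ℕ) (hj1 : 1 ≤ j) (hj2 : j ≤ k - 2)
    (a : Equiv.Perm (Fin (k + 1)))
    (ha : a = (fun b => Cmove k (Rmove k b))^[j] (Cmove k (Lmove k (Cmove k 1)))) :
    a ⟨0, by omega⟩ = ⟨k - j + 1, by omega⟩ ∧
    a ⟨1, by omega⟩ = ⟨1, by omega⟩ ∧
    (∀ p : ℕ, ∀ _h2 : 2 ≤ p, ∀ _hp : p ≤ j,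
      a ⟨p, by omega⟩ = ⟨k - j + p, by omega⟩) ∧
    a ⟨j + 1, by omega⟩ = ⟨2, by omega⟩ ∧
    a ⟨j + 2, by omega⟩ = ⟨0, by omega⟩ ∧
    (∀ p : ℕ, ∀ _h3 : j + 3 ≤ p, ∀ _hp : p ≤ k,
      a ⟨p, by omega⟩ = ⟨p - j, by omega⟩) :=
  after_j_right_rounds_general k j hj1 hj2 a ha
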